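/- Unique parameterization of open evaluation contexts: if P ∈ E_V and P ∈ E_W (i.e., the program context P is an open evaluation context with needed-variable sets V and W) then V = W. -/

import Mathlib

/-! ## Terms of the pure λ-calculus (named syntax) -/

inductive Term : Type
  | var : ℕ → Term
  | lam : ℕ → Term → Term
  | app : Term → Term → Term
  deriving DecidableEq

namespace Term

/-- Size of a term: |x| = 1, |λx.t| = |t|+1, |t u| = |t|+|u|+1. -/
def size : Term → ℕ
  | var _ => 1
  | lam _ t => size t + 1
  | app t u => size t + size u + 1

/-- Free variables of a term. -/
def fv : Term → Finset ℕ
  | var x => {x}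
  | lam x t => (fv t).erase x
  | app t u => fv t ∪ fv u

/-- Meta-level substitution t{x←u}. -/
def subst (x : ℕ) (u : Term) : Term → Term
  | var y => if y = x then u else var y
  | lam y t => if y = x then lam y t else lam y (subst x u t)
  | app t s => app (subst x u t) (subst x u s)

def isVarB : Term → Bool
  | var _ => true
  | _ => false

/-- Values are abstractions (variables are not values). -/
def IsValue (t : Term) : Prop := ∃ x u, t = lam x u

/-- Needed variables of a term. -/
def nv : Term → Finset ℕ
  | var x => {x}
  | lam _ _ => ∅
  | app t u => nv t ∪ nv u

/-- Applied variables of a term. -/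
def anv : Term → Finset ℕ
  | var _ => ∅
  | lam _ _ => ∅
  | app (var x) u => insert x (anv u)
  | app (lam y t) u => anv (lam y t) ∪ anv u
  | app (app t s) u => anv (app t s) ∪ anv u

/-- Unapplied variables of a term. -/
def unv : Term → Finset ℕ
  | var x => {x}
  | lam _ _ => ∅
  | app (var _) u => unv u
  | app (lam y t) u => unv (lam y t) ∪ unv u
  | app (app t s) u => unv (app t s) ∪ unv u

end Term

/-! ## Inert terms and fireballs: i ::= x | i f,  f ::= v | i -/

mutual
  inductive Term.Inert : Term → Prop
    | var (x : ℕ) : Term.Inert (Term.var x)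
    | app {i f : Term} : Term.Inert i → Term.Fireball f → Term.Inert (Term.app i f)
  inductive Term.Fireball : Term → Prop
    | val {x : ℕ} {t : Term} : Term.Fireball (Term.lam x t)
    | inert {i : Term} : Term.Inert i → Term.Fireball i
end

/-- Non-variable inert terms i⁺. -/
def Term.InertPlus (t : Term) : Prop := t.Inert ∧ ∀ x, t ≠ Term.var x

/-! ## β-reduction (closure of the root rule under arbitrary term contexts) -/

inductive Beta : Term → Term → Prop
  | beta (x : ℕ) (t u : Term) : Beta (Term.app (Term.lam x t) u) (Term.subst x u t)
  | lam {t t' : Term} (x : ℕ) : Beta t t' → Beta (Term.lam x t) (Term.lam x t')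
  | appL {t t' : Term} (u : Term) : Beta t t' → Beta (Term.app t u) (Term.app t' u)
  | appR {u u' : Term} (t : Term) : Beta u u' → Beta (Term.app t u) (Term.app t u')

/-- `iterRel R n a b`: an n-step R-reduction sequence from a to b. -/
def iterRel {α : Type} (R : α → α → Prop) : ℕ → α → α → Prop
  | 0 => Eq
  | n + 1 => fun a c => ∃ b, R a b ∧ iterRel R n b c

/-! ## Environments and programs -/

/-- Environments are finite lists of explicit substitutions, written
left-to-right, i.e. E[x←t] is `E ++ [(x, t)]`. -/
abbrev Env := List (ℕ × Term)

def Env.dom (E : Env) : Finset ℕ := (E.map Prod.fst).toFinset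

/-- Content of the leftmost explicit substitution on x. -/
def Env.lookupES : Env → ℕ → Option Term
  | [], _ => none
  | (y, t) :: E, x => if y = x then some t else Env.lookupES E x

structure Program where
  tm : Term
  env : Env

/-- p@[x←u] : appending an explicit substitution at the end of the environment. -/
def Program.appES (p : Program) (x : ℕ) (u : Term) : Program := ⟨p.tm, p.env ++ [(x, u)]⟩

/-- One step of the needed-variables computation along an explicit substitution. -/
def nvStep (V : Finset ℕ) (e : ℕ × Term) : Finset ℕ :=
  if e.1 ∈ V then (V.erase e.1) ∪ Term.nv e.2 else V

/-- Needed variables of a program. -/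
def Program.nv (p : Program) : Finset ℕ := p.env.foldl nvStep p.tm.nv

/-- One step of the applied-variables computation (carrying needed variables). -/
def anvStep : Finset ℕ × Finset ℕ → ℕ × Term → Finset ℕ × Finset ℕ
  | (N, A), (x, u) =>
    (nvStep N (x, u),
      if x ∈ N then
        match u with
        | Term.var y => if x ∈ A then (A.erase x) ∪ {y} else A.erase x
        | _ => (A.erase x) ∪ Term.anv u
      else A)

/-- Applied variables of a program. -/
def Program.anv (p : Program) : Finset ℕ :=
  (p.env.foldl anvStep (p.tm.nv, p.tm.anv)).2

/-- One step of the unapplied-variables computation (carrying needed variables). -/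
def unvStep : Finset ℕ × Finset ℕ → ℕ × Term → Finset ℕ × Finset ℕ
  | (N, U), (x, u) =>
    (nvStep N (x, u),
      if x ∈ U ∨ (x ∈ N ∧ u.isVarB = false) then (U.erase x) ∪ Term.unv u else U)

/-- Unapplied variables of a program. -/
def Program.unv (p : Program) : Finset ℕ :=
  (p.env.foldl unvStep (p.tm.nv, p.tm.unv)).2

/-- Unfolding of a program into a term: unf(t, ε) = t, unf(t, E[x←u]) = unf(t, E){x←u}. -/
def Program.unf (p : Program) : Term :=
  p.env.foldl (fun s e => Term.subst e.1 e.2 s) p.tm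

/-! ## Term contexts H ::= ⟨·⟩ | H t | i H (i inert, enforced by WF) -/

inductive HCtx : Type
  | hole : HCtx
  | appL : HCtx → Term → HCtx
  | appR : Term → HCtx → HCtx

namespace HCtx

/-- Well-formedness: in i H, the left part i must be an inert term. -/
def WF : HCtx → Prop
  | hole => True
  | appL H _ => WF H
  | appR i H => Term.Inert i ∧ WF H

def plug : HCtx → Term → Term
  | hole, t => t
  | appL H u, t => Term.app (plug H t) u
  | appR i H, t => Term.app i (plug H t)

def nv : HCtx → Finset ℕ
  | hole => ∅
  | appL H _ => nv H
  | appR i H => Term.nv i ∪ nv H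

def anv : HCtx → Finset ℕ
  | hole => ∅
  | appL H _ => anv H
  | appR i H => Term.anv i ∪ anv H

def unv : HCtx → Finset ℕ
  | hole => ∅
  | appL H _ => unv H
  | appR i H => Term.unv i ∪ unv H

end HCtx

/-- Applicative term contexts H@ ::= ⟨·⟩ t | H@ t | i H@. -/
inductive HCtx.IsApp : HCtx → Prop
  | base (t : Term) : HCtx.IsApp (HCtx.appL HCtx.hole t)
  | appL {H : HCtx} (t : Term) : HCtx.IsApp H → HCtx.IsApp (HCtx.appL H t)
  | appR {H : HCtx} {i : Term} : Term.Inert i → HCtx.IsApp H → HCtx.IsApp (HCtx.appR i H)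

/-! ## Program contexts: hole in the term part (tc) or inside an ES (ec) -/

inductive PCtx : Type
  | tc : HCtx → Env → PCtx
  | ec : Term → Env → ℕ → HCtx → Env → PCtx

namespace PCtx

/-- P@[x←u] : appending an explicit substitution at the end of the environment of P. -/
def appES : PCtx → ℕ → Term → PCtx
  | tc H E, x, u => tc H (E ++ [(x, u)])
  | ec t E1 y H E2, x, u => ec t E1 y H (E2 ++ [(x, u)])

/-- Plugging a term into a program context. -/
def plugT : PCtx → Term → Program
  | tc H E, t => ⟨H.plug t, E⟩
  | ec u E1 x H E2, t => ⟨u, E1 ++ (x, H.plug t) :: E2⟩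

/-- Plugging a program into a program context: the plugged environment is appended
right after the position of the hole. -/
def plugP : PCtx → Program → Program
  | tc H E, q => ⟨H.plug q.tm, q.env ++ E⟩
  | ec u E1 x H E2, q => ⟨u, E1 ++ (x, H.plug q.tm) :: (q.env ++ E2)⟩

/-- Variables bound by the environment of P. -/
def dom : PCtx → Finset ℕ
  | tc _ E => Env.dom E
  | ec _ E1 y _ E2 => insert y (Env.dom E1 ∪ Env.dom E2)

/-- P(x): content of the leftmost explicit substitution on x occurring after the hole. -/
def lookup : PCtx → ℕ → Option Term
  | tc _ E, x => Env.lookupES E x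
  | ec _ _ _ _ E2, x => Env.lookupES E2 x

/-- (P⟨x⟩)@[x←H] : plug the variable x in the hole of P and append the ES [x←H],
whose content H now contains the hole. -/
def hered (P : PCtx) (x : ℕ) (H : HCtx) : PCtx :=
  ec (P.plugT (Term.var x)).tm (P.plugT (Term.var x)).env x H []

end PCtx

/-! ## Open CbNeed evaluation contexts P ∈ E_V -/

inductive OEC : PCtx → Finset ℕ → Prop
  | ax {H : HCtx} : H.WF → OEC (PCtx.tc H []) H.nv
  | gc {P : PCtx} {V : Finset ℕ} {x : ℕ} (t : Term) :
      OEC P V → x ∉ V → x ∉ P.dom → OEC (P.appES x t) V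
  | inert {P : PCtx} {V : Finset ℕ} {x : ℕ} {i : Term} :
      OEC P V → x ∈ V → Term.Inert i → x ∉ P.dom →
      OEC (P.appES x i) ((V.erase x) ∪ i.nv)
  | her {P : PCtx} {V : Finset ℕ} {x : ℕ} {H : HCtx} :
      OEC P V → x ∉ V → x ∉ P.dom → H.WF →
      OEC (P.hered x H) (V ∪ H.nv)

/-! ## Open CbNeed reduction -/

inductive StepOM : Program → Program → Prop
  | mk {P : PCtx} {V : Finset ℕ} {x : ℕ} {t u : Term} :
      OEC P V →
      StepOM (P.plugT (Term.app (Term.lam x t) u)) (P.plugP ⟨t, [(x, u)]⟩)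

inductive StepOE : Program → Program → Prop
  | mk {P : PCtx} {V : Finset ℕ} {x : ℕ} {v : Term} :
      OEC P V → P.lookup x = some v → v.IsValue →
      StepOE (P.plugT (Term.var x)) (P.plugT v)

def StepOnd (p q : Program) : Prop := StepOM p q ∨ StepOE p q

/-! ## Open CbNeed normal programs -/

inductive PInert : Program → Prop
  | ax {i : Term} : i.Inert → PInert ⟨i, []⟩
  | inert {p : Program} {x : ℕ} {i : Term} :
      PInert p → x ∈ p.nv → i.Inert → PInert (p.appES x i)
  | gc {p : Program} {x : ℕ} (t : Term) :
      PInert p → x ∉ p.nv → PInert (p.appES x t)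

inductive PAbs : Program → Prop
  | ax {v : Term} : v.IsValue → PAbs ⟨v, []⟩
  | gc {p : Program} {x : ℕ} (t : Term) : PAbs p → PAbs (p.appES x t)

def ONorm (p : Program) : Prop := PInert p ∨ PAbs p

/-! ## Useful Open CbNeed: multiplicative and exponential evaluation contexts -/

def upd (S : Finset ℕ) (x y : ℕ) : Finset ℕ := if x ∈ S then (S.erase x) ∪ {y} else S

inductive MEC : PCtx → Finset ℕ → Finset ℕ → Prop
  | ax {H : HCtx} : H.WF → MEC (PCtx.tc H []) H.unv H.anv
  | var {P : PCtx} {U A : Finset ℕ} {x y : ℕ} :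
      MEC P U A → x ∈ U ∪ A → x ∉ P.dom →
      MEC (P.appES x (Term.var y)) (upd U x y) (upd A x y)
  | gc {P : PCtx} {U A : Finset ℕ} {x : ℕ} (t : Term) :
      MEC P U A → x ∉ U ∪ A → x ∉ P.dom → MEC (P.appES x t) U A
  | inert {P : PCtx} {U A : Finset ℕ} {x : ℕ} {i : Term} :
      MEC P U A → x ∈ U ∪ A → i.InertPlus → x ∉ P.dom →
      MEC (P.appES x i) ((U.erase x) ∪ i.unv) ((A.erase x) ∪ i.anv)
  | val {P : PCtx} {U A : Finset ℕ} {x : ℕ} {v : Term} :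
      MEC P U A → x ∈ U → x ∉ A → v.IsValue → x ∉ P.dom →
      MEC (P.appES x v) (U.erase x) A
  | her {P : PCtx} {U A : Finset ℕ} {x : ℕ} {H : HCtx} :
      MEC P U A → x ∉ U ∪ A → x ∉ P.dom → H.WF →
      MEC (P.hered x H) (U ∪ H.unv) (A ∪ H.anv)

/-- Exponential evaluation contexts P ∈ E@_{U,A}; the last (natural number) index
counts the number of applications of rule (e_NA) in the derivation. -/
inductive EEC : PCtx → Finset ℕ → Finset ℕ → ℕ → Prop
  | ax1 {H : HCtx} : H.IsApp → EEC (PCtx.tc H []) H.unv H.anv 0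
  | ax2 {P : PCtx} {U A : Finset ℕ} {x : ℕ} {H : HCtx} :
      MEC P U A → x ∉ U ∪ A → x ∉ P.dom → H.IsApp →
      EEC (P.hered x H) ((U.erase x) ∪ H.unv) (A ∪ H.anv) 0
  | var {P : PCtx} {U A : Finset ℕ} {k : ℕ} {x y : ℕ} :
      EEC P U A k → x ∈ U ∪ A → x ∉ P.dom →
      EEC (P.appES x (Term.var y)) (upd U x y) (upd A x y) k
  | inert {P : PCtx} {U A : Finset ℕ} {k : ℕ} {x : ℕ} {i : Term} :
      EEC P U A k → x ∈ U ∪ A → i.InertPlus → x ∉ P.dom →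
      EEC (P.appES x i) ((U.erase x) ∪ i.unv) ((A.erase x) ∪ i.anv) k
  | gc {P : PCtx} {U A : Finset ℕ} {k : ℕ} {x : ℕ} (t : Term) :
      EEC P U A k → x ∉ U ∪ A → x ∉ P.dom → EEC (P.appES x t) U A k
  | val {P : PCtx} {U A : Finset ℕ} {k : ℕ} {x : ℕ} {v : Term} :
      EEC P U A k → x ∈ U → x ∉ A → v.IsValue → x ∉ P.dom →
      EEC (P.appES x v) (U.erase x) A k
  | na {P : PCtx} {U A : Finset ℕ} {k : ℕ} {x : ℕ} :
      EEC P U A k → x ∉ A → x ∉ P.dom →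
      EEC (P.hered x HCtx.hole) (U.erase x) A (k + 1)

/-! ## Useful Open CbNeed reduction -/

inductive StepUM : Program → Program → Prop
  | mk {P : PCtx} {U A : Finset ℕ} {x : ℕ} {t u : Term} :
      MEC P U A →
      StepUM (P.plugT (Term.app (Term.lam x t) u)) (P.plugP ⟨t, [(x, u)]⟩)

inductive StepUE : Program → Program → Prop
  | mk {P : PCtx} {U A : Finset ℕ} {k : ℕ} {x : ℕ} {v : Term} :
      EEC P U A k → P.lookup x = some v → v.IsValue →
      StepUE (P.plugT (Term.var x)) (P.plugT v)

def StepUnd (p q : Program) : Prop := StepUM p q ∨ StepUE p q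

/-- Useful multiplicative steps whose evaluation context lies in Em_{U,A}. -/
def StepUMat (U A : Finset ℕ) (p q : Program) : Prop :=
  ∃ (P : PCtx) (x : ℕ) (t u : Term), MEC P U A ∧
    p = P.plugT (Term.app (Term.lam x t) u) ∧ q = P.plugP ⟨t, [(x, u)]⟩

/-- Useful exponential steps whose evaluation context lies in E@_{U,A}. -/
def StepUEat (U A : Finset ℕ) (p q : Program) : Prop :=
  ∃ (P : PCtx) (k : ℕ) (x : ℕ) (v : Term), EEC P U A k ∧
    P.lookup x = some v ∧ v.IsValue ∧
    p = P.plugT (Term.var x) ∧ q = P.plugT v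

/-! ## Useful normal-form predicates -/

inductive GenVar : ℕ → Program → Prop
  | ax (x : ℕ) : GenVar x ⟨Term.var x, []⟩
  | her {x : ℕ} {p : Program} (y : ℕ) : GenVar x p → GenVar y (p.appES x (Term.var y))
  | gc {x z : ℕ} {p : Program} (t : Term) : GenVar x p → z ≠ x → GenVar x (p.appES z t)

inductive UfAbs : Program → Prop
  | ax {v : Term} : v.IsValue → UfAbs ⟨v, []⟩
  | gv {p : Program} {x : ℕ} {v : Term} : GenVar x p → v.IsValue → UfAbs (p.appES x v)
  | gc {p : Program} {x : ℕ} (t : Term) : UfAbs p → UfAbs (p.appES x t)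

inductive UfInert : Program → Prop
  | ax {i : Term} : i.InertPlus → UfInert ⟨i, []⟩
  | gv {p : Program} {x : ℕ} {i : Term} : GenVar x p → i.InertPlus → UfInert (p.appES x i)
  | inert {p : Program} {x : ℕ} {i : Term} :
      UfInert p → x ∈ p.nv → i.Inert → UfInert (p.appES x i)
  | useless {p : Program} {x : ℕ} {v : Term} :
      UfInert p → x ∈ p.unv → x ∉ p.anv → v.IsValue → UfInert (p.appES x v)
  | gc {p : Program} {x : ℕ} (t : Term) : UfInert p → x ∉ p.nv → UfInert (p.appES x t)

def UfNorm (p : Program) : Prop := UfInert p ∨ UfAbs p ∨ ∃ x, GenVar x p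

/-! ## The size-exploding family -/

/-- t₁ := λx.λy. y x x  (x := 0, y := 1). -/
def t1 : Term := Term.lam 0 (Term.lam 1 (Term.app (Term.app (Term.var 1) (Term.var 0)) (Term.var 0)))

/-- λy. y x x. -/
def tbody : Term := Term.lam 1 (Term.app (Term.app (Term.var 1) (Term.var 0)) (Term.var 0))

/-- The family t_n (values for n ≥ 1; tfam 0 is a dummy). -/
def tfam : ℕ → Term
  | 0 => t1
  | 1 => t1
  | n + 2 => Term.lam 0 (Term.app (tfam (n + 1)) tbody)

/-- I := λz.z. -/
def Idt : Term := Term.lam 2 (Term.var 2)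

/-- The family u_n : u₀ = I, u_{n+1} = λy. y u_n u_n. -/
def ufam : ℕ → Term
  | 0 => Idt
  | n + 1 => Term.lam 1 (Term.app (Term.app (Term.var 1) (ufam n)) (ufam n))

/-! ## Needed variables discovered before a given one

Plug into `P ∈ E_V` a variable `x ∉ V` that `P` does not bind. Then `V` consists of the variables
that evaluation of `P⟨x⟩` discovers to be needed before it reaches `x`. These can be computed from
the program `P⟨x⟩` and `x` alone, although rule (O_her) forgets where the hole of its premise was,
so `V` is unique. -/

/-- The needed variables of a term that precede, from left to right, the first needed occurrence
of `x`; all of them if `x` is not needed. -/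
def Term.nvBefore : Term → ℕ → Finset ℕ
  | var y, x => {y} \ {x}
  | lam _ _, _ => ∅
  | app t u, x => if x ∈ t.nv then t.nvBefore x else t.nv ∪ u.nvBefore x

/-- One step of the computation of `Program.nvBefore` along an explicit substitution. The state `F`
maps each variable to the needed variables discovered before it. If `x` is needed in `e.2`, and
`e.1` is discovered before `x`, then evaluation enters `e.2` and first meets `x` there. -/
def nvBeforeStep (F : ℕ → Finset ℕ) (e : ℕ × Term) (x : ℕ) : Finset ℕ :=
  if x ∈ e.2.nv ∧ e.1 ∈ F x then F e.1 ∪ e.2.nvBefore x else nvStep (F x) e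

/-- The needed variables of a program that Open CbNeed evaluation discovers before `x`. -/
def Program.nvBefore (p : Program) : ℕ → Finset ℕ := p.env.foldl nvBeforeStep p.tm.nvBefore

theorem Program.nvBefore_appES (p : Program) (y : ℕ) (t : Term) :
    (p.appES y t).nvBefore = nvBeforeStep p.nvBefore (y, t) := by
  simp [Program.nvBefore, Program.appES]

theorem mem_nvStep_of_ne {V : Finset ℕ} {e : ℕ × Term} {z : ℕ} (hz : z ∈ V) (hne : z ≠ e.1) :
    z ∈ nvStep V e := by
  unfold nvStep
  split_ifs <;> simp [hz, hne]

namespace HCtx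

theorem mem_nv_plug_var (H : HCtx) (x : ℕ) : x ∈ (H.plug (.var x)).nv := by
  induction H <;> simp_all [plug, Term.nv]

theorem nvBefore_plug_var {H : HCtx} {x : ℕ} (hx : x ∉ H.nv) :
    (H.plug (.var x)).nvBefore x = H.nv := by
  induction H <;> simp_all [plug, nv, Term.nvBefore, mem_nv_plug_var]

theorem mem_nvBefore_plug_var {H : HCtx} {x z : ℕ} (hx : x ∉ H.nv) (hne : z ≠ x) :
    z ∈ (H.plug (.var z)).nvBefore x := by
  induction H with
  | hole => simp [plug, Term.nvBefore, hne]
  | appL H u ih =>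
    simp only [plug, Term.nvBefore]
    split_ifs
    · exact ih hx
    · exact Finset.mem_union_left _ (H.mem_nv_plug_var z)
  | appR i H ih => simp_all [plug, nv, Term.nvBefore]

end HCtx

namespace PCtx

theorem plugT_appES (P : PCtx) (y : ℕ) (t u : Term) :
    (P.appES y t).plugT u = (P.plugT u).appES y t := by
  cases P <;> simp [appES, plugT, Program.appES]

theorem plugT_hered (P : PCtx) (y : ℕ) (H : HCtx) (u : Term) :
    (P.hered y H).plugT u = (P.plugT (.var y)).appES y (H.plug u) :=
  rfl

theorem dom_appES (P : PCtx) (y : ℕ) (t : Term) : (P.appES y t).dom = insert y P.dom := by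
  cases P <;> simp [appES, dom, Env.dom, Finset.insert_comm]

theorem dom_hered (P : PCtx) (y : ℕ) (H : HCtx) : (P.hered y H).dom = insert y P.dom := by
  cases P <;> simp [hered, plugT, dom, Env.dom]

end PCtx

namespace OEC

theorem mem_nvBefore_plugT_var {P : PCtx} {V : Finset ℕ} (hP : OEC P V) {x z : ℕ}
    (hxV : x ∉ V) (hxP : x ∉ P.dom) (hzP : z ∉ P.dom) (hne : z ≠ x) :
    z ∈ (P.plugT (.var z)).nvBefore x := by
  induction hP generalizing x z with
  | ax => exact HCtx.mem_nvBefore_plug_var hxV hne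
  | @gc P V y t _ hyV hyP ih =>
    simp only [PCtx.dom_appES, Finset.mem_insert, not_or] at hxP hzP
    rw [PCtx.plugT_appES, Program.nvBefore_appES, nvBeforeStep]
    split_ifs
    · exact Finset.mem_union_left _ (ih hyV hyP hzP.2 hzP.1)
    · exact mem_nvStep_of_ne (ih hxV hxP.2 hzP.2 hne) hzP.1
  | @inert P V y i _ _ _ _ ih =>
    simp only [PCtx.dom_appES, Finset.mem_insert, not_or] at hxP hzP
    have hxi : x ∉ i.nv := fun h => hxV (Finset.mem_union_right _ h)
    have hxV' : x ∉ V := fun h =>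
      hxV (Finset.mem_union_left _ (Finset.mem_erase_of_ne_of_mem hxP.1 h))
    rw [PCtx.plugT_appES, Program.nvBefore_appES, nvBeforeStep, if_neg (hxi ·.1)]
    exact mem_nvStep_of_ne (ih hxV' hxP.2 hzP.2 hne) hzP.1
  | @her P V y H _ _ hyP _ ih =>
    simp only [PCtx.dom_hered, Finset.mem_insert, Finset.mem_union, not_or] at hxV hxP hzP
    have hy : y ∈ (P.plugT (.var y)).nvBefore x := ih hxV.1 hxP.2 hyP (Ne.symm hxP.1)
    rw [PCtx.plugT_hered, Program.nvBefore_appES, nvBeforeStep]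
    split_ifs
    · exact Finset.mem_union_right _ (HCtx.mem_nvBefore_plug_var hxV.2 hne)
    · rw [nvStep, if_pos hy]
      exact Finset.mem_union_right _ (H.mem_nv_plug_var z)

theorem nvBefore_plugT_var {P : PCtx} {V : Finset ℕ} (hP : OEC P V) {x : ℕ}
    (hxV : x ∉ V) (hxP : x ∉ P.dom) : (P.plugT (.var x)).nvBefore x = V := by
  induction hP generalizing x with
  | ax => exact HCtx.nvBefore_plug_var hxV
  | @gc P V y t _ hyV _ ih =>
    simp only [PCtx.dom_appES, Finset.mem_insert, not_or] at hxP
    simp [PCtx.plugT_appES, Program.nvBefore_appES, nvBeforeStep, nvStep, ih hxV hxP.2, hyV]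
  | @inert P V y i _ hyV _ _ ih =>
    simp only [PCtx.dom_appES, Finset.mem_insert, Finset.mem_union, Finset.mem_erase, not_or,
      not_and] at hxP hxV
    simp [PCtx.plugT_appES, Program.nvBefore_appES, nvBeforeStep, nvStep,
      ih (hxV.1 hxP.1) hxP.2, hyV, hxV.2]
  | @her P V y H hP hyV hyP _ ih =>
    simp only [PCtx.dom_hered, Finset.mem_insert, Finset.mem_union, not_or] at hxV hxP
    have hy : y ∈ (P.plugT (.var y)).nvBefore x :=
      hP.mem_nvBefore_plugT_var hxV.1 hxP.2 hyP (Ne.symm hxP.1)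
    rw [PCtx.plugT_hered, Program.nvBefore_appES, nvBeforeStep,
      if_pos ⟨H.mem_nv_plug_var x, hy⟩, ih hyV hyP, HCtx.nvBefore_plug_var hxV.2]

end OEC

/-- unique parameterization of open evaluation contexts. -/
theorem OEC_unique_parameterization :
    ∀ (P : PCtx) (V W : Finset ℕ), OEC P V → OEC P W → V = W := by
  intro P V W hV hW
  obtain ⟨x, hx⟩ := Infinite.exists_notMem_finset (V ∪ W ∪ P.dom)
  simp only [Finset.mem_union, not_or] at hx
  obtain ⟨⟨hxV, hxW⟩, hxP⟩ := hx
  exact (hV.nvBefore_plugT_var hxV hxP).symm.trans (hW.nvBefore_plugT_var hxW hxP)
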